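/- Let α, β, ν ∈ ℝ. Let u : ℝ² → ℝ be a smooth function of (t,x), set m = u − u_xx, and suppose that at every point m_t + α u_x m + ∂_x( (β − 2αu) m ) = 0. Then at every point ∂_t( u_xx² + 2 u_x² + u² + 2ν u ) + ∂_x[ −2(u + ν) u_tx − 2 u_x u_t + (m + 2ν)(β − 2αu) m + αν (u² − u_x²) ] = 0; that is, the gradient-energy density u_xx² + 2 u_x² + u² + 2ν u satisfies a local conservation law. -/

import Mathlib

/-!
The conservation law has characteristic `2 (m + ν)`: its left-hand side is the equation
multiplied by `2 (m + ν)`, for every `C³` function `u`. With `g = β - 2 α u`, this is the sum of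

* `∂_t (u_xx² + 2 u_x² + u² + 2 ν u) + ∂_x (-2 (u + ν) u_tx - 2 u_x u_t) = 2 (m + ν) m_t`, and
* `∂_x ((m + 2 ν) g m + α ν (u² - u_x²)) = 2 (m + ν) (α u_x m + (g m)_x)`.

The second holds because `g_x = -2 α u_x` makes `2 m (α u_x m + (g m)_x)` equal to `(g m²)_x`,
while `2 u_x m = (u² - u_x²)_x`.
-/

open Real

noncomputable section

/-- Partial derivative in the first (time) variable. -/
def pt (f : ℝ → ℝ → ℝ) (t x : ℝ) : ℝ := deriv (fun s => f s x) t

/-- Partial derivative in the second (space) variable. -/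
def px (f : ℝ → ℝ → ℝ) (t x : ℝ) : ℝ := deriv (fun y => f t y) x

/-- The momentum variable `m = u - u_xx`. -/
def mf (u : ℝ → ℝ → ℝ) (t x : ℝ) : ℝ := u t x - px (px u) t x

section Slices

variable {𝕜 E : Type*} [NontriviallyNormedField 𝕜] [NormedAddCommGroup E] [NormedSpace 𝕜 E]
  {f : 𝕜 → 𝕜 → E} {t x : 𝕜}

lemma hasDerivAt_uncurry_fst (hf : DifferentiableAt 𝕜 (Function.uncurry f) (t, x)) :
    HasDerivAt (fun s => f s x) (fderiv 𝕜 (Function.uncurry f) (t, x) (1, 0)) t :=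
  hf.hasFDerivAt.comp_hasDerivAt (f := fun s => (s, x)) t
    ((hasDerivAt_id' t).prodMk (hasDerivAt_const t x))

lemma hasDerivAt_uncurry_snd (hf : DifferentiableAt 𝕜 (Function.uncurry f) (t, x)) :
    HasDerivAt (fun y => f t y) (fderiv 𝕜 (Function.uncurry f) (t, x) (0, 1)) x :=
  hf.hasFDerivAt.comp_hasDerivAt x ((hasDerivAt_const x t).prodMk (hasDerivAt_id' x))

end Slices

section PartialDerivatives

variable {f : ℝ → ℝ → ℝ} {t x : ℝ}

lemma pt_eq_fderiv (hf : DifferentiableAt ℝ (Function.uncurry f) (t, x)) :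
    pt f t x = fderiv ℝ (Function.uncurry f) (t, x) (1, 0) :=
  (hasDerivAt_uncurry_fst hf).deriv

lemma px_eq_fderiv (hf : DifferentiableAt ℝ (Function.uncurry f) (t, x)) :
    px f t x = fderiv ℝ (Function.uncurry f) (t, x) (0, 1) :=
  (hasDerivAt_uncurry_snd hf).deriv

lemma hasDerivAt_pt (hf : DifferentiableAt ℝ (Function.uncurry f) (t, x)) :
    HasDerivAt (fun s => f s x) (pt f t x) t :=
  (hasDerivAt_uncurry_fst hf).differentiableAt.hasDerivAt

lemma hasDerivAt_px (hf : DifferentiableAt ℝ (Function.uncurry f) (t, x)) :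
    HasDerivAt (fun y => f t y) (px f t x) x :=
  (hasDerivAt_uncurry_snd hf).differentiableAt.hasDerivAt

lemma uncurry_pt_eq_fderiv (hf : Differentiable ℝ (Function.uncurry f)) :
    Function.uncurry (pt f) = fun p => fderiv ℝ (Function.uncurry f) p (1, 0) :=
  funext fun p => pt_eq_fderiv (hf p)

lemma uncurry_px_eq_fderiv (hf : Differentiable ℝ (Function.uncurry f)) :
    Function.uncurry (px f) = fun p => fderiv ℝ (Function.uncurry f) p (0, 1) :=
  funext fun p => px_eq_fderiv (hf p)

variable {m n : WithTop ℕ∞}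

lemma contDiff_pt (hf : ContDiff ℝ n (Function.uncurry f)) (hmn : m + 1 ≤ n) :
    ContDiff ℝ m (Function.uncurry (pt f)) := by
  rw [uncurry_pt_eq_fderiv ((hf.of_le hmn).differentiable (by simp))]
  exact (hf.fderiv_right hmn).clm_apply contDiff_const

lemma contDiff_px (hf : ContDiff ℝ n (Function.uncurry f)) (hmn : m + 1 ≤ n) :
    ContDiff ℝ m (Function.uncurry (px f)) := by
  rw [uncurry_px_eq_fderiv ((hf.of_le hmn).differentiable (by simp))]
  exact (hf.fderiv_right hmn).clm_apply contDiff_const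

lemma px_pt_comm (hf : ContDiff ℝ 2 (Function.uncurry f)) (t x : ℝ) :
    px (pt f) t x = pt (px f) t x := by
  have hf₁ : Differentiable ℝ (Function.uncurry f) := hf.differentiable two_ne_zero
  have hf₂ : DifferentiableAt ℝ (fderiv ℝ (Function.uncurry f)) (t, x) :=
    (hf.fderiv_right one_add_one_eq_two.le).differentiable one_ne_zero _
  have hpt : DifferentiableAt ℝ (Function.uncurry (pt f)) (t, x) :=
    (contDiff_pt hf one_add_one_eq_two.le).differentiable one_ne_zero _
  have hpx : DifferentiableAt ℝ (Function.uncurry (px f)) (t, x) :=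
    (contDiff_px hf one_add_one_eq_two.le).differentiable one_ne_zero _
  have hsymm : IsSymmSndFDerivAt ℝ (Function.uncurry f) (t, x) :=
    hf.contDiffAt.isSymmSndFDerivAt (by simp)
  rw [px_eq_fderiv hpt, pt_eq_fderiv hpx, uncurry_pt_eq_fderiv hf₁, uncurry_px_eq_fderiv hf₁,
    fderiv_clm_apply hf₂ (differentiableAt_const _),
    fderiv_clm_apply hf₂ (differentiableAt_const _)]
  simpa using hsymm (0, 1) (1, 0)

end PartialDerivatives

section GradientEnergy

/-- The left-hand side `m_t + α u_x m + ∂_x ((β - 2 α u) m)` of the equation. -/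
def linearFamilyOperator (α β : ℝ) (u : ℝ → ℝ → ℝ) (t x : ℝ) : ℝ :=
  pt (mf u) t x + α * px u t x * mf u t x
    + px (fun t' x' => (β - 2 * α * u t' x') * mf u t' x') t x

/-- The gradient-energy density `u_xx² + 2 u_x² + u² + 2 ν u`, the conserved density `T`. -/
def gradientEnergyDensity (ν : ℝ) (u : ℝ → ℝ → ℝ) (t x : ℝ) : ℝ :=
  (px (px u) t x) ^ 2 + 2 * (px u t x) ^ 2 + (u t x) ^ 2 + 2 * ν * u t x

/-- The part `-2 (u + ν) u_tx - 2 u_x u_t` of the flux, balancing the density against `m_t`; the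
mixed derivative `u_tx` is taken as `∂_t (u_x)`. -/
def timeDerivativeFlux (ν : ℝ) (u : ℝ → ℝ → ℝ) (t x : ℝ) : ℝ :=
  -2 * (u t x + ν) * pt (px u) t x - 2 * px u t x * pt u t x

/-- The part `(m + 2 ν) (β - 2 α u) m + α ν (u² - u_x²)` of the flux, coming from the terms of the
equation without time derivatives. -/
def momentumFlux (α β ν : ℝ) (u : ℝ → ℝ → ℝ) (t x : ℝ) : ℝ :=
  (mf u t x + 2 * ν) * (β - 2 * α * u t x) * mf u t x
    + α * ν * ((u t x) ^ 2 - (px u t x) ^ 2)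

/-- The flux `Φ` paired with `gradientEnergyDensity`. -/
def gradientEnergyFlux (α β ν : ℝ) (u : ℝ → ℝ → ℝ) (t x : ℝ) : ℝ :=
  -2 * (u t x + ν) * pt (px u) t x - 2 * px u t x * pt u t x
    + (mf u t x + 2 * ν) * (β - 2 * α * u t x) * mf u t x
    + α * ν * ((u t x) ^ 2 - (px u t x) ^ 2)

lemma gradientEnergyFlux_eq_add (α β ν : ℝ) (u : ℝ → ℝ → ℝ) (t x : ℝ) :
    gradientEnergyFlux α β ν u t x = timeDerivativeFlux ν u t x + momentumFlux α β ν u t x :=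
  add_assoc _ _ _

variable {u : ℝ → ℝ → ℝ}

lemma contDiff_mf {m n : WithTop ℕ∞} (hu : ContDiff ℝ n (Function.uncurry u)) (hmn : m + 2 ≤ n) :
    ContDiff ℝ m (Function.uncurry (mf u)) := by
  have hmn' : m + 1 + 1 ≤ n := by rwa [add_assoc, one_add_one_eq_two]
  exact (hu.of_le (le_self_add.trans hmn)).sub (contDiff_px (contDiff_px hu hmn') le_rfl)

lemma pt_mf (hu : ContDiff ℝ 3 (Function.uncurry u)) (t x : ℝ) :
    pt (mf u) t x = pt u t x - pt (px (px u)) t x := by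
  have hux : ContDiff ℝ 2 (Function.uncurry (px u)) := contDiff_px hu two_add_one_eq_three.le
  have huxx : ContDiff ℝ 1 (Function.uncurry (px (px u))) := contDiff_px hux one_add_one_eq_two.le
  exact ((hasDerivAt_pt (hu.differentiable three_ne_zero _)).fun_sub
    (hasDerivAt_pt (huxx.differentiable one_ne_zero _))).deriv

lemma pt_gradientEnergyDensity (ν : ℝ) (hu : ContDiff ℝ 3 (Function.uncurry u)) (t x : ℝ) :
    pt (gradientEnergyDensity ν u) t x =
      2 * px (px u) t x * pt (px (px u)) t x + 4 * px u t x * pt (px u) t x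
        + 2 * (u t x + ν) * pt u t x := by
  have hux : ContDiff ℝ 2 (Function.uncurry (px u)) := contDiff_px hu two_add_one_eq_three.le
  have huxx : ContDiff ℝ 1 (Function.uncurry (px (px u))) := contDiff_px hux one_add_one_eq_two.le
  have du := hasDerivAt_pt (hu.differentiable three_ne_zero (t, x))
  have dux := hasDerivAt_pt (hux.differentiable two_ne_zero (t, x))
  have duxx := hasDerivAt_pt (huxx.differentiable one_ne_zero (t, x))
  refine ((((duxx.fun_pow 2).fun_add ((dux.fun_pow 2).const_mul 2)).fun_add
    (du.fun_pow 2)).fun_add (du.const_mul (2 * ν))).deriv.trans ?_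
  ring

lemma hasDerivAt_timeDerivativeFlux (ν : ℝ) (hu : ContDiff ℝ 3 (Function.uncurry u)) (t x : ℝ) :
    HasDerivAt (fun y => timeDerivativeFlux ν u t y)
      (2 * (mf u t x + ν) * pt (mf u) t x - pt (gradientEnergyDensity ν u) t x) x := by
  have hux : ContDiff ℝ 2 (Function.uncurry (px u)) := contDiff_px hu two_add_one_eq_three.le
  have hut : ContDiff ℝ 2 (Function.uncurry (pt u)) := contDiff_pt hu two_add_one_eq_three.le
  have huxt : ContDiff ℝ 1 (Function.uncurry (pt (px u))) := contDiff_pt hux one_add_one_eq_two.le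
  have du := hasDerivAt_px (hu.differentiable three_ne_zero (t, x))
  have dux := hasDerivAt_px (hux.differentiable two_ne_zero (t, x))
  have dut := hasDerivAt_px (hut.differentiable two_ne_zero (t, x))
  have duxt := hasDerivAt_px (huxt.differentiable one_ne_zero (t, x))
  have hutx : px (pt u) t x = pt (px u) t x := px_pt_comm (hu.of_le (by norm_num)) t x
  have huxtx : px (pt (px u)) t x = pt (px (px u)) t x := px_pt_comm hux t x
  refine ((((du.add_const ν).const_mul (-2)).fun_mul duxt).fun_sub
    ((dux.const_mul 2).fun_mul dut)).congr_deriv ?_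
  rw [hutx, huxtx, pt_gradientEnergyDensity ν hu, pt_mf hu, mf]
  ring

lemma hasDerivAt_momentumFlux (α β ν : ℝ) (hu : ContDiff ℝ 3 (Function.uncurry u)) (t x : ℝ) :
    HasDerivAt (fun y => momentumFlux α β ν u t y)
      (2 * (mf u t x + ν) * (α * px u t x * mf u t x
        + px (fun t' x' => (β - 2 * α * u t' x') * mf u t' x') t x)) x := by
  have hux : ContDiff ℝ 2 (Function.uncurry (px u)) := contDiff_px hu two_add_one_eq_three.le
  have hm : ContDiff ℝ 1 (Function.uncurry (mf u)) := contDiff_mf hu (by norm_num)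
  have du := hasDerivAt_px (hu.differentiable three_ne_zero (t, x))
  have dux := hasDerivAt_px (hux.differentiable two_ne_zero (t, x))
  have dm := hasDerivAt_px (hm.differentiable one_ne_zero (t, x))
  have dg : HasDerivAt (fun y => β - 2 * α * u t y) (-(2 * α * px u t x)) x :=
    (du.const_mul (2 * α)).const_sub β
  have hgm : px (fun t' x' => (β - 2 * α * u t' x') * mf u t' x') t x =
      -(2 * α * px u t x) * mf u t x + (β - 2 * α * u t x) * px (mf u) t x :=
    (dg.fun_mul dm).deriv
  have huxx : px (px u) t x = u t x - mf u t x := (sub_sub_self _ _).symm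
  refine ((((dm.add_const (2 * ν)).fun_mul dg).fun_mul dm).fun_add
    (((du.fun_pow 2).fun_sub (dux.fun_pow 2)).const_mul (α * ν))).congr_deriv ?_
  rw [hgm, huxx]
  ring

theorem gradient_energy_conservation_linear_family_general (α β ν : ℝ)
    (hu : ContDiff ℝ 3 (Function.uncurry u)) (t x : ℝ) :
    pt (gradientEnergyDensity ν u) t x + px (gradientEnergyFlux α β ν u) t x =
      2 * (mf u t x + ν) * linearFamilyOperator α β u t x := by
  have hflux := (hasDerivAt_timeDerivativeFlux ν hu t x).fun_add
    (hasDerivAt_momentumFlux α β ν hu t x)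
  simp only [← gradientEnergyFlux_eq_add] at hflux
  rw [px, hflux.deriv, linearFamilyOperator]
  ring

end GradientEnergy

/-- gradient-energy conservation law for the family
`m_t + α u_x m + ∂_x((β - 2αu) m) = 0`. -/
theorem gradient_energy_conservation_linear_family
    (α β ν : ℝ)
    (u : ℝ → ℝ → ℝ) (hu : ContDiff ℝ (⊤ : ℕ∞) (Function.uncurry u))
    (heq : ∀ t x : ℝ,
      pt (mf u) t x
        + α * px u t x * mf u t x
        + px (fun t' x' => (β - 2 * α * u t' x') * mf u t' x') t x = 0) :
    ∀ t x : ℝ,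
      pt (fun t' x' =>
          (px (px u) t' x')^2 + 2 * (px u t' x')^2 + (u t' x')^2 + 2 * ν * u t' x') t x
        + px (fun t' x' =>
            -2 * (u t' x' + ν) * pt (px u) t' x'
              - 2 * px u t' x' * pt u t' x'
              + (mf u t' x' + 2 * ν) * (β - 2 * α * u t' x') * mf u t' x'
              + α * ν * ((u t' x')^2 - (px u t' x')^2)) t x = 0 := fun t x =>
  (gradient_energy_conservation_linear_family_general α β ν (hu.of_le ENat.LEInfty.out) t x).trans
    (mul_eq_zero_of_right _ (heq t x))

end
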